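/- Let X ∈ C^{1-κ}(𝕋²) and Z ∈ C^{-κ}(𝕋²). The Anderson form 𝔞(u₁,u₂) = ∫∇v₁·∇v₂ e^{2X} dx - ⟨Z, v₁v₂ e^{2X}⟩ + c∫v₁v₂ e^{2X} dx, where v_i = e^{-X}u_i and c ∈ ℝ, is continuous on its domain D(𝔞) = e^X H¹ equipped with the norm ‖u‖_𝔞² = ‖u‖_{L²}² + ‖e^{-X}u‖_{H¹}²: there exists C > 0 with |𝔞(u₁,u₂)| ≤ C‖u₁‖_𝔞 ‖u₂‖_𝔞. -/

import Mathlib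

open MeasureTheory Complex Filter Topology ENNReal

noncomputable section

/-- fundamental domain of the torus `𝕋^d = (ℝ/2πℤ)^d` -/
def box (d : ℕ) : Set (Fin d → ℝ) := Set.univ.pi fun _ => Set.Ico 0 (2 * Real.pi)

/-- Lebesgue measure on the torus, realized on the fundamental domain -/
def μbox (d : ℕ) : Measure (Fin d → ℝ) := volume.restrict (box d)

/-- Euclidean norm of a frequency `k ∈ ℤ^d` -/
def knorm {d : ℕ} (k : Fin d → ℤ) : ℝ := Real.sqrt (∑ i, ((k i : ℝ)) ^ 2)

/-- the character `e^{i k·x}` on the torus -/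
def char {d : ℕ} (k : Fin d → ℤ) (x : Fin d → ℝ) : ℂ :=
  Complex.exp (Complex.I * ((∑ i, (k i : ℝ) * x i : ℝ) : ℂ))

/-- realization of a Fourier coefficient sequence as a function/distribution -/
def realize {d : ℕ} (c : (Fin d → ℤ) → ℂ) (x : Fin d → ℝ) : ℂ := ∑' k, c k * char k x

/-- sharp Littlewood–Paley block: frequencies in the annulus `2^{n-1} ≤ |k| < 2^n`
(ball `|k| < 1` for `n = 0`) -/
def lpBlock {d : ℕ} (n : ℕ) (c : (Fin d → ℤ) → ℂ) : (Fin d → ℤ) → ℂ := fun k =>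
  if n = 0 then (if knorm k < 1 then c k else 0)
  else if (2 : ℝ) ^ (n - 1) ≤ knorm k ∧ knorm k < 2 ^ n then c k else 0

/-- `L^p(𝕋^d)` norm of the `n`-th Littlewood–Paley block -/
def blockLp {d : ℕ} (n : ℕ) (p : ℝ≥0∞) (c : (Fin d → ℤ) → ℂ) : ℝ≥0∞ :=
  eLpNorm (realize (lpBlock n c)) p (μbox d)

/-- the Besov norm `B^α_{p,q}(𝕋^d)`: `ℓ^q` norm over `n` of `2^{αn} ‖Δ_n u‖_{L^p}` -/
def besovNorm {d : ℕ} (α : ℝ) (p q : ℝ≥0∞) (c : (Fin d → ℤ) → ℂ) : ℝ≥0∞ :=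
  if q = ∞ then ⨆ n : ℕ, (2 : ℝ≥0∞) ^ (α * (n : ℝ)) * blockLp n p c
  else (∑' n : ℕ, ((2 : ℝ≥0∞) ^ (α * (n : ℝ)) * blockLp n p c) ^ q.toReal) ^ (1 / q.toReal)

/-- the product of distributions, as convolution of Fourier coefficients -/
def convC {d : ℕ} (a b : (Fin d → ℤ) → ℂ) : (Fin d → ℤ) → ℂ := fun k => ∑' j, a j * b (k - j)

/-- the duality pairing `⟨u, v⟩ = Σ_k û(k) v̂(-k)` -/
def pairC {d : ℕ} (a b : (Fin d → ℤ) → ℂ) : ℂ := ∑' k : Fin d → ℤ, a k * b (-k)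

/-- Fourier coefficients of a function on the torus -/
def coeffC {d : ℕ} (f : (Fin d → ℝ) → ℂ) (k : Fin d → ℤ) : ℂ :=
  (((2 * Real.pi) ^ d : ℝ) : ℂ)⁻¹ * ∫ x in box d, f x * (starRingEnd ℂ) (char k x)

/-- squared Sobolev norm `‖·‖_{H^s(𝕋^d)}²` of a Fourier coefficient sequence -/
def sobSq {d : ℕ} (s : ℝ) (c : (Fin d → ℤ) → ℂ) : ℝ≥0∞ :=
  ∑' k, ENNReal.ofReal ((1 + knorm k ^ 2) ^ s) * ((‖c k‖₊ : ℝ≥0∞)) ^ 2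

/-- squared `L²(𝕋^d)` norm of a Fourier coefficient sequence -/
def l2Sq {d : ℕ} (c : (Fin d → ℤ) → ℂ) : ℝ≥0∞ := ∑' k, ((‖c k‖₊ : ℝ≥0∞)) ^ 2

/-- `j`-th partial derivative at the level of Fourier coefficients -/
def gradC {d : ℕ} (j : Fin d) (a : (Fin d → ℤ) → ℂ) : (Fin d → ℤ) → ℂ :=
  fun k => Complex.I * (k j : ℂ) * a k

/-- Fourier coefficients of `e^X` -/
def EXc {d : ℕ} (X : (Fin d → ℝ) → ℝ) : (Fin d → ℤ) → ℂ :=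
  coeffC fun x => (Real.exp (X x) : ℂ)

/-- Fourier coefficients of `e^{2X}` -/
def E2Xc {d : ℕ} (X : (Fin d → ℝ) → ℝ) : (Fin d → ℤ) → ℂ :=
  coeffC fun x => (Real.exp (2 * X x) : ℂ)

/-- the Anderson form
`𝔞(u₁,u₂) = ∫ ∇v₁·∇v₂ e^{2X} dx - ⟨Z, v₁v₂ e^{2X}⟩ + c ∫ v₁v₂ e^{2X} dx`,
expressed spectrally through the Fourier coefficients `a₁, a₂` of `v₁, v₂`
(all integrals `∫ fg` are computed as `Σ_k f̂(k) ĝ(-k)`, which rescales the form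
by the harmless constant `(2π)^{-2}`). -/
def aForm (X : (Fin 2 → ℝ) → ℝ) (Z : (Fin 2 → ℤ) → ℂ) (c : ℝ)
    (a₁ a₂ : (Fin 2 → ℤ) → ℂ) : ℂ :=
  (∑ j : Fin 2, pairC (convC (gradC j a₁) (gradC j a₂)) (E2Xc X))
    - pairC (convC a₁ a₂) (convC Z (E2Xc X))
    + (c : ℂ) * pairC (convC a₁ a₂) (E2Xc X)

/-- `(2π)`-periodicity in each coordinate -/
def periodicT {d : ℕ} (f : (Fin d → ℝ) → ℝ) : Prop :=
  ∀ (x : Fin d → ℝ) (i : Fin d),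
    f (fun j => x j + if j = i then 2 * Real.pi else 0) = f x

/-- squared form-domain norm `‖u‖_𝔞² = ‖u‖_{L²}² + ‖e^{-X}u‖_{H¹}²` of `u = e^X v`,
through the Fourier coefficients `a` of `v`. -/
def anormSq (X : (Fin 2 → ℝ) → ℝ) (a : (Fin 2 → ℤ) → ℂ) : ℝ≥0∞ :=
  l2Sq (convC (EXc X) a) + sobSq 1 a

/-- Cauchy–Schwarz for sums in `ℝ≥0∞`. -/
theorem ENNReal.sq_tsum_le {ι : Type*} {a p q : ι → ℝ≥0∞} (h : ∀ i, a i ^ 2 ≤ p i * q i) :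
    (∑' i, a i) ^ 2 ≤ (∑' i, p i) * ∑' i, q i := by
  let _ : MeasurableSpace ι := ⊤
  have hle : ∀ i, a i ≤ p i ^ (1 / 2 : ℝ) * q i ^ (1 / 2 : ℝ) := fun i => by
    rw [← ENNReal.mul_rpow_of_nonneg _ _ (by norm_num : (0 : ℝ) ≤ 1 / 2)]
    have := ENNReal.rpow_le_rpow (h i) (by norm_num : (0 : ℝ) ≤ 1 / 2)
    rwa [← ENNReal.rpow_two, ← ENNReal.rpow_mul, mul_one_div_cancel two_ne_zero,
      ENNReal.rpow_one] at this
  have hcs := ENNReal.lintegral_mul_le_Lp_mul_Lq (μ := Measure.count)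
    (p := 2) (q := 2) (f := fun i => p i ^ (1 / 2 : ℝ)) (g := fun i => q i ^ (1 / 2 : ℝ))
    Real.HolderConjugate.two_two measurable_from_top.aemeasurable
    measurable_from_top.aemeasurable
  simp only [Pi.mul_apply, lintegral_count, ← ENNReal.rpow_mul] at hcs
  norm_num at hcs
  have := pow_le_pow_left₀ zero_le ((ENNReal.tsum_le_tsum hle).trans (by simpa using hcs)) 2
  refine this.trans_eq ?_
  rw [mul_pow, ← ENNReal.rpow_two, ← ENNReal.rpow_two, ← ENNReal.rpow_mul, ← ENNReal.rpow_mul]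
  norm_num

/-- Summing a product over a shifted index. -/
theorem ENNReal.tsum_tsum_mul_sub {G : Type*} [AddGroup G] (f g : G → ℝ≥0∞) :
    ∑' k, ∑' l, f l * g (k - l) = (∑' k, f k) * ∑' k, g k := by
  rw [ENNReal.tsum_comm, ← ENNReal.tsum_mul_right]
  refine tsum_congr fun l => ?_
  rw [ENNReal.tsum_mul_left, ← (Equiv.subRight l).tsum_eq g]
  rfl

theorem one_le_one_add_knorm_sq {d : ℕ} (k : Fin d → ℤ) : 1 ≤ 1 + knorm k ^ 2 := by
  nlinarith [sq_nonneg (knorm k)]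

theorem one_add_knorm_sq_pos {d : ℕ} (k : Fin d → ℤ) : 0 < 1 + knorm k ^ 2 := by positivity

theorem knorm_sq {d : ℕ} (k : Fin d → ℤ) : knorm k ^ 2 = ∑ i, (k i : ℝ) ^ 2 :=
  Real.sq_sqrt (by positivity)

theorem knorm_neg {d : ℕ} (k : Fin d → ℤ) : knorm (-k) = knorm k := by
  simp [knorm]

theorem one_add_knorm_sq_le {d : ℕ} (k l : Fin d → ℤ) :
    1 + knorm k ^ 2 ≤ 4 * max (1 + knorm l ^ 2) (1 + knorm (k - l) ^ 2) := by
  have h : knorm k ^ 2 ≤ 2 * knorm l ^ 2 + 2 * knorm (k - l) ^ 2 := by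
    rw [knorm_sq, knorm_sq, knorm_sq, Finset.mul_sum, Finset.mul_sum, ← Finset.sum_add_distrib]
    refine Finset.sum_le_sum fun i _ => ?_
    push_cast [Pi.sub_apply]
    nlinarith [sq_nonneg ((k i : ℝ) - 2 * l i)]
  have h1 := le_max_left (1 + knorm l ^ 2) (1 + knorm (k - l) ^ 2)
  have h2 := le_max_right (1 + knorm l ^ 2) (1 + knorm (k - l) ^ 2)
  linarith

/-- The Sobolev weight `(1 + |k|²)^s`. -/
def sobW {d : ℕ} (s : ℝ) (k : Fin d → ℤ) : ℝ≥0∞ := ENNReal.ofReal ((1 + knorm k ^ 2) ^ s)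

theorem sobW_add {d : ℕ} (s t : ℝ) (k : Fin d → ℤ) : sobW (s + t) k = sobW s k * sobW t k := by
  rw [sobW, sobW, sobW, ← ENNReal.ofReal_mul (by positivity),
    Real.rpow_add (one_add_knorm_sq_pos k)]

theorem sobW_zero {d : ℕ} (k : Fin d → ℤ) : sobW 0 k = 1 := by simp [sobW]

theorem sobW_neg_index {d : ℕ} (s : ℝ) (k : Fin d → ℤ) : sobW s (-k) = sobW s k := by
  rw [sobW, sobW, knorm_neg]

theorem sobSq_eq {d : ℕ} (s : ℝ) (c : (Fin d → ℤ) → ℂ) :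
    sobSq s c = ∑' k, sobW s k * ‖c k‖ₑ ^ 2 := rfl

theorem tsum_sobW_ne_top {p : ℝ} (hp : 1 < p) : ∑' k : Fin 2 → ℤ, sobW (-p) k ≠ ∞ := by
  have hs := EisensteinSeries.summable_one_div_norm_rpow (k := 2 * p) (by linarith)
  have hs' : Summable fun k : Fin 2 → ℤ => if k = 0 then (1 : ℝ) else 0 :=
    summable_of_ne_finset_zero (s := {0}) (by simp)
  refine ne_top_of_le_ne_top (hs.add hs').tsum_ofReal_ne_top (ENNReal.tsum_le_tsum fun k => ?_)
  refine ENNReal.ofReal_le_ofReal ?_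
  by_cases hk : k = 0
  · subst hk
    simp [knorm, Real.zero_rpow (show -(2 * p) ≠ 0 by linarith)]
  · have hpos : 0 < ‖k‖ := norm_pos_iff.mpr hk
    rw [if_neg hk, add_zero, show -(2 * p) = 2 * (-p) by ring, Real.rpow_mul hpos.le, Real.rpow_two]
    refine Real.rpow_le_rpow_of_nonpos (by positivity) ?_ (by linarith)
    have : ‖k‖ ≤ knorm k := by
      refine (pi_norm_le_iff_of_nonneg (Real.sqrt_nonneg _)).mpr fun i => ?_
      refine Real.le_sqrt_of_sq_le ?_
      rw [Int.norm_eq_abs, sq_abs]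
      exact Finset.single_le_sum (f := fun i => (k i : ℝ) ^ 2) (fun j _ => sq_nonneg _)
        (Finset.mem_univ i)
    nlinarith

theorem Real.rpow_neg_mul_rpow_neg_le {x y a b : ℝ} (hx : 1 ≤ x) (hy : 1 ≤ y) (ha : 0 ≤ a)
    (hb : 0 ≤ b) : x ^ (-a) * y ^ (-b) ≤ x ^ (-(a + b)) + y ^ (-(a + b)) := by
  have hx0 : 0 < x := by linarith
  have hy0 : 0 < y := by linarith
  rcases le_total x y with h | h
  · have : y ^ (-b) ≤ x ^ (-b) := Real.rpow_le_rpow_of_nonpos hx0 h (by linarith)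
    rw [neg_add, Real.rpow_add hx0]
    have := mul_le_mul_of_nonneg_left this (by positivity : 0 ≤ x ^ (-a))
    have : 0 ≤ y ^ (-a + -b) := by positivity
    linarith
  · have : x ^ (-a) ≤ y ^ (-a) := Real.rpow_le_rpow_of_nonpos hy0 h (by linarith)
    rw [neg_add, Real.rpow_add hy0]
    have := mul_le_mul_of_nonneg_right this (by positivity : 0 ≤ y ^ (-b))
    have : 0 ≤ x ^ (-a + -b) := by positivity
    linarith

theorem sobW_mul_kernel_le {d : ℕ} {s₁ s₂ t : ℝ} (ht : 0 ≤ t) (h₁ : t ≤ s₁) (h₂ : t ≤ s₂)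
    (k l : Fin d → ℤ) :
    sobW t k * (sobW (-s₁) l * sobW (-s₂) (k - l)) ≤
      ENNReal.ofReal (2 * 4 ^ t) * (sobW (-(s₁ + s₂ - t)) l + sobW (-(s₁ + s₂ - t)) (k - l)) := by
  unfold sobW
  rw [← ENNReal.ofReal_mul (by positivity), ← ENNReal.ofReal_mul (by positivity),
    ← ENNReal.ofReal_add (by positivity) (by positivity), ← ENNReal.ofReal_mul (by positivity)]
  refine ENNReal.ofReal_le_ofReal ?_
  have hx := one_le_one_add_knorm_sq l
  have hy := one_le_one_add_knorm_sq (k - l)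
  have hk := one_add_knorm_sq_le k l
  have hk0 := one_add_knorm_sq_pos k
  generalize 1 + knorm l ^ 2 = x at *
  generalize 1 + knorm (k - l) ^ 2 = y at *
  generalize 1 + knorm k ^ 2 = z at *
  have hx0 : 0 < x := by linarith
  have hy0 : 0 < y := by linarith
  have hz : z ^ t ≤ 4 ^ t * (x ^ t + y ^ t) := by
    refine (Real.rpow_le_rpow hk0.le hk ht).trans ?_
    rw [Real.mul_rpow (by norm_num) (by positivity)]
    gcongr
    rcases max_choice x y with h | h <;> rw [h] <;> simp only [le_add_iff_nonneg_right,
      le_add_iff_nonneg_left] <;> positivity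
  have e1 : x ^ t * (x ^ (-s₁) * y ^ (-s₂)) ≤ x ^ (-(s₁ + s₂ - t)) + y ^ (-(s₁ + s₂ - t)) := by
    rw [← mul_assoc, ← Real.rpow_add hx0, show t + -s₁ = -(s₁ - t) by ring,
      show s₁ + s₂ - t = (s₁ - t) + s₂ by ring]
    exact Real.rpow_neg_mul_rpow_neg_le hx hy (by linarith) (by linarith)
  have e2 : y ^ t * (x ^ (-s₁) * y ^ (-s₂)) ≤ x ^ (-(s₁ + s₂ - t)) + y ^ (-(s₁ + s₂ - t)) := by
    rw [mul_left_comm, ← Real.rpow_add hy0, show t + -s₂ = -(s₂ - t) by ring,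
      show s₁ + s₂ - t = s₁ + (s₂ - t) by ring]
    exact Real.rpow_neg_mul_rpow_neg_le hx hy (by linarith) (by linarith)
  calc z ^ t * (x ^ (-s₁) * y ^ (-s₂))
      ≤ 4 ^ t * (x ^ t + y ^ t) * (x ^ (-s₁) * y ^ (-s₂)) := by gcongr
    _ = 4 ^ t * (x ^ t * (x ^ (-s₁) * y ^ (-s₂)) + y ^ t * (x ^ (-s₁) * y ^ (-s₂))) := by ring
    _ ≤ 4 ^ t * ((x ^ (-(s₁ + s₂ - t)) + y ^ (-(s₁ + s₂ - t))) +
          (x ^ (-(s₁ + s₂ - t)) + y ^ (-(s₁ + s₂ - t)))) := by gcongr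
    _ = _ := by ring

/-- The Sobolev product estimate `H^{s₁} · H^{s₂} ⊆ H^t` on the two-dimensional torus, for
nonnegative Fourier coefficients. -/
theorem exists_sob_conv_le {s₁ s₂ t : ℝ} (ht : 0 ≤ t) (h₁ : t ≤ s₁) (h₂ : t ≤ s₂)
    (h : 1 < s₁ + s₂ - t) :
    ∃ C : ℝ≥0∞, C ≠ ∞ ∧ ∀ f g : (Fin 2 → ℤ) → ℝ≥0∞,
      ∑' k, sobW t k * (∑' l, f l * g (k - l)) ^ 2 ≤
        C * ((∑' k, sobW s₁ k * f k ^ 2) * ∑' k, sobW s₂ k * g k ^ 2) := by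
  set S : ℝ≥0∞ := ∑' k : Fin 2 → ℤ, sobW (-(s₁ + s₂ - t)) k with hS
  refine ⟨ENNReal.ofReal (2 * 4 ^ t) * (S + S), ENNReal.mul_ne_top ENNReal.ofReal_ne_top
    (ENNReal.add_ne_top.mpr ⟨tsum_sobW_ne_top h, tsum_sobW_ne_top h⟩), fun f g => ?_⟩
  rw [← ENNReal.tsum_tsum_mul_sub, ← ENNReal.tsum_mul_left]
  refine ENNReal.tsum_le_tsum fun k => ?_
  have hcs : (∑' l, f l * g (k - l)) ^ 2 ≤ (∑' l, sobW (-s₁) l * sobW (-s₂) (k - l)) *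
      ∑' l, sobW s₁ l * f l ^ 2 * (sobW s₂ (k - l) * g (k - l) ^ 2) := by
    refine ENNReal.sq_tsum_le fun l => le_of_eq ?_
    have e1 : sobW (-s₁) l * sobW s₁ l = 1 := by rw [← sobW_add, neg_add_cancel, sobW_zero]
    have e2 : sobW (-s₂) (k - l) * sobW s₂ (k - l) = 1 := by
      rw [← sobW_add, neg_add_cancel, sobW_zero]
    calc (f l * g (k - l)) ^ 2 = sobW (-s₁) l * sobW s₁ l * f l ^ 2 *
          (sobW (-s₂) (k - l) * sobW s₂ (k - l) * g (k - l) ^ 2) := by rw [e1, e2]; ring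
      _ = _ := by ring
  have hK : sobW t k * ∑' l, sobW (-s₁) l * sobW (-s₂) (k - l) ≤
      ENNReal.ofReal (2 * 4 ^ t) * (S + S) := by
    rw [← ENNReal.tsum_mul_left]
    refine (ENNReal.tsum_le_tsum fun l => sobW_mul_kernel_le ht h₁ h₂ k l).trans_eq ?_
    rw [ENNReal.tsum_mul_left, ENNReal.tsum_add]
    congr 2
    exact (Equiv.subLeft k).tsum_eq (sobW (-(s₁ + s₂ - t)))
  calc sobW t k * (∑' l, f l * g (k - l)) ^ 2
      ≤ sobW t k * ((∑' l, sobW (-s₁) l * sobW (-s₂) (k - l)) *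
        ∑' l, sobW s₁ l * f l ^ 2 * (sobW s₂ (k - l) * g (k - l) ^ 2)) := by gcongr
    _ ≤ _ := by rw [← mul_assoc]; gcongr

theorem enorm_convC_le {d : ℕ} (a b : (Fin d → ℤ) → ℂ) (k : Fin d → ℤ) :
    ‖convC a b k‖ₑ ≤ ∑' l, ‖a l‖ₑ * ‖b (k - l)‖ₑ := by
  refine enorm_tsum_le_tsum_enorm.trans_eq (tsum_congr fun l => enorm_mul _ _)

/-- The pairing of a product of two `H¹` functions with a product of an `H^{-1/3}` distribution
and an `H^{2/3}` function. -/
theorem exists_pairC_convC_convC_le :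
    ∃ C : ℝ≥0∞, C ≠ ∞ ∧ ∀ a b z e : (Fin 2 → ℤ) → ℂ,
      ‖pairC (convC a b) (convC z e)‖ₑ ^ 2 ≤
        C * (sobSq 1 a * sobSq 1 b) * (sobSq (-(1 / 3)) z * sobSq (2 / 3) e) := by
  obtain ⟨C₁, hC₁, H₁⟩ := exists_sob_conv_le (s₁ := 1) (s₂ := 1) (t := 5 / 6) (by norm_num)
    (by norm_num) (by norm_num) (by norm_num)
  obtain ⟨C₂, hC₂, H₂⟩ := exists_sob_conv_le (s₁ := 5 / 6) (s₂ := 2 / 3) (t := 1 / 3) (by norm_num)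
    (by norm_num) (by norm_num) (by norm_num)
  refine ⟨C₁ * C₂, ENNReal.mul_ne_top hC₁ hC₂, fun a b z e => ?_⟩
  set A : (Fin 2 → ℤ) → ℝ≥0∞ := fun k => ∑' l, ‖a l‖ₑ * ‖b (k - l)‖ₑ
  set B : (Fin 2 → ℤ) → ℝ≥0∞ := fun k => ∑' l, A l * ‖e (k - l)‖ₑ
  have hT : ‖pairC (convC a b) (convC z e)‖ₑ ≤ ∑' j, ‖z j‖ₑ * B (-j) := by
    calc ‖pairC (convC a b) (convC z e)‖ₑ
        ≤ ∑' k, ‖convC a b k * convC z e (-k)‖ₑ := enorm_tsum_le_tsum_enorm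
      _ ≤ ∑' k, A k * ∑' j, ‖z j‖ₑ * ‖e (-k - j)‖ₑ := by
          refine ENNReal.tsum_le_tsum fun k => ?_
          rw [enorm_mul]
          exact mul_le_mul' (enorm_convC_le a b k) (enorm_convC_le z e (-k))
      _ = ∑' k, ∑' j, ‖z j‖ₑ * (A k * ‖e (-j - k)‖ₑ) := by
          refine tsum_congr fun k => ?_
          rw [← ENNReal.tsum_mul_left]
          refine tsum_congr fun j => ?_
          rw [show -k - j = -j - k by abel]
          ring
      _ = _ := by
          rw [ENNReal.tsum_comm]
          exact tsum_congr fun j => ENNReal.tsum_mul_left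
  have hcs : (∑' j, ‖z j‖ₑ * B (-j)) ^ 2 ≤
      sobSq (-(1 / 3)) z * ∑' k, sobW (1 / 3) k * B k ^ 2 := by
    rw [← (Equiv.neg _).tsum_eq fun k => sobW (1 / 3) k * B k ^ 2]
    refine ENNReal.sq_tsum_le fun j => le_of_eq ?_
    have e1 : sobW (-(1 / 3)) j * sobW (1 / 3) j = 1 := by
      rw [← sobW_add, neg_add_cancel, sobW_zero]
    change (‖z j‖ₑ * B (-j)) ^ 2 = sobW (-(1 / 3)) j * ‖z j‖ₑ ^ 2 * (sobW (1 / 3) (-j) * B (-j) ^ 2)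
    rw [sobW_neg_index]
    calc (‖z j‖ₑ * B (-j)) ^ 2 = 1 * (‖z j‖ₑ ^ 2 * B (-j) ^ 2) := by ring
      _ = _ := by rw [← e1]; ring
  calc ‖pairC (convC a b) (convC z e)‖ₑ ^ 2
      ≤ sobSq (-(1 / 3)) z * ∑' k, sobW (1 / 3) k * B k ^ 2 :=
        (pow_le_pow_left₀ zero_le hT 2).trans hcs
    _ ≤ sobSq (-(1 / 3)) z * (C₂ * ((C₁ * (sobSq 1 a * sobSq 1 b)) * sobSq (2 / 3) e)) := by
        gcongr
        refine (H₂ A fun k => ‖e k‖ₑ).trans ?_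
        gcongr
        · exact H₁ (fun k => ‖a k‖ₑ) fun k => ‖b k‖ₑ
        · exact le_rfl
    _ = _ := by ring

section Torus

/-- Haar probability measure on the circle, the normalization behind `UnitAddTorus.mFourier`. -/
local instance : MeasureSpace UnitAddCircle := ⟨AddCircle.haarAddCircle⟩

local instance : Measure.IsAddHaarMeasure (volume : Measure UnitAddCircle) :=
  inferInstanceAs (Measure.IsAddHaarMeasure AddCircle.haarAddCircle)

local instance : IsProbabilityMeasure (volume : Measure UnitAddCircle) :=
  inferInstanceAs (IsProbabilityMeasure AddCircle.haarAddCircle)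

open UnitAddTorus
open scoped Pointwise

variable {d : ℕ}

/-- The quotient map `ℝ^d → (ℝ/2πℤ)^d ≃ (ℝ/ℤ)^d`. -/
def toTorus (x : Fin d → ℝ) : UnitAddTorus (Fin d) :=
  fun i => ((x i / (2 * Real.pi) : ℝ) : UnitAddCircle)

theorem char_eq_mFourier (k : Fin d → ℤ) (x : Fin d → ℝ) :
    char k x = mFourier k (toTorus x) := by
  simp only [char, mFourier, toTorus, ContinuousMap.coe_mk, fourier_coe_apply]
  rw [← Complex.exp_sum]
  congr 1
  push_cast
  rw [Finset.mul_sum]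
  refine Finset.sum_congr rfl fun i _ => ?_
  have : (Real.pi : ℂ) ≠ 0 := by exact_mod_cast Real.pi_ne_zero
  field_simp

theorem isOpenQuotientMap_toTorus :
    IsOpenQuotientMap (toTorus : (Fin d → ℝ) → UnitAddTorus (Fin d)) := by
  have h : IsOpenQuotientMap (fun (x : Fin d → ℝ) (i : Fin d) => (x i : UnitAddCircle)) :=
    IsOpenQuotientMap.piMap fun _ => QuotientAddGroup.isOpenQuotientMap_mk
  have h2 : (2 * Real.pi)⁻¹ ≠ 0 := by positivity
  have := h.comp (Homeomorph.smulOfNeZero (α := Fin d → ℝ) _ h2).isOpenQuotientMap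
  convert! this using 2
  ext i
  simp [toTorus, div_eq_inv_mul]

theorem periodicT.add_intCast_mul {f : (Fin d → ℝ) → ℝ} (hf : periodicT f) (s : Finset (Fin d))
    (n : Fin d → ℤ) (x : Fin d → ℝ) :
    f (fun j => x j + if j ∈ s then n j * (2 * Real.pi) else 0) = f x := by
  have single : ∀ (i : Fin d) (m : ℤ) (x : Fin d → ℝ),
      f (fun j => x j + if j = i then m * (2 * Real.pi) else 0) = f x := by
    intro i m
    induction m with
    | zero => simp
    | succ m ih =>
      intro x
      rw [← ih x, ← hf (fun j => x j + if j = i then ((m : ℤ) : ℝ) * (2 * Real.pi) else 0) i]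
      congr 1
      ext j
      split_ifs <;> push_cast <;> ring
    | pred m ih =>
      intro x
      rw [← ih x, ← hf (fun j => x j + if j = i then ((-m - 1 : ℤ) : ℝ) * (2 * Real.pi) else 0) i]
      congr 1
      ext j
      split_ifs <;> push_cast <;> ring
  induction s using Finset.induction_on with
  | empty => simp
  | insert i s hi ih =>
    rw [← ih, ← single i (n i) (fun j => x j + if j ∈ s then n j * (2 * Real.pi) else 0)]
    congr 1
    ext j
    by_cases h : j = i
    · subst h; simp [hi]
    · simp [h]

theorem periodicT.exists_lift {f : (Fin d → ℝ) → ℝ} (hf : periodicT f) (hc : Continuous f) :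
    ∃ F : C(UnitAddTorus (Fin d), ℝ), ∀ x, F (toTorus x) = f x := by
  let q : C(Fin d → ℝ, UnitAddTorus (Fin d)) := ⟨toTorus, isOpenQuotientMap_toTorus.continuous⟩
  have hq : Topology.IsQuotientMap q := isOpenQuotientMap_toTorus.isQuotientMap
  have hfac : ∀ x y : Fin d → ℝ, toTorus x = toTorus y → f x = f y := by
    intro x y h
    have : ∀ i, ∃ n : ℤ, y i = x i + n * (2 * Real.pi) := fun i => by
      have hi := congrFun h i
      rw [toTorus, toTorus, QuotientAddGroup.eq] at hi
      obtain ⟨n, hn⟩ := AddSubgroup.mem_zmultiples_iff.mp hi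
      refine ⟨n, ?_⟩
      have hpi := Real.pi_pos
      simp only [zsmul_eq_mul, mul_one] at hn
      rw [hn]
      field_simp
      ring
    choose n hn using this
    rw [← hf.add_intCast_mul Finset.univ n x]
    congr 1
    ext i
    simp [hn]
  have hfac' : Function.FactorsThrough (⟨f, hc⟩ : C(Fin d → ℝ, ℝ)) q := fun x y => hfac x y
  exact ⟨hq.lift ⟨f, hc⟩ hfac', fun x => DFunLike.congr_fun (hq.lift_comp ⟨f, hc⟩ hfac') x⟩

theorem integral_box_comp_toTorus {E : Type*} [NormedAddCommGroup E] [NormedSpace ℝ E]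
    (G : UnitAddTorus (Fin d) → E) :
    ∫ x in box d, G (toTorus x) = ((2 * Real.pi) ^ d) • ∫ t, G t := by
  have hpi : 0 < 2 * Real.pi := by positivity
  have h1 : ∫ t, G t = ∫ x in Set.univ.pi fun _ : Fin d => Set.Ico (0 : ℝ) 1,
      G (fun i => (x i : UnitAddCircle)) := by
    rw [UnitAddTorus.integral_preimage G 0]
    have e : {x : Fin d → ℝ | ∀ i, x i ∈ Set.Ioc ((0 : Fin d → ℝ) i) ((0 : Fin d → ℝ) i + 1)} =
        Set.univ.pi fun _ : Fin d => Set.Ioc (0 : ℝ) 1 := by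
      ext x; simp
    rw [e]
    refine setIntegral_congr_set ?_
    exact (Measure.univ_pi_Ioc_ae_eq_Icc (μ := fun _ : Fin d => (volume : Measure ℝ))).trans
      (Measure.univ_pi_Ico_ae_eq_Icc (μ := fun _ : Fin d => (volume : Measure ℝ))).symm
  have h2 := Measure.setIntegral_comp_smul_of_pos (volume : Measure (Fin d → ℝ))
    (fun x => G (toTorus x)) (Set.univ.pi fun _ : Fin d => Set.Ico (0 : ℝ) 1) hpi
  have h3 : ((2 * Real.pi) • Set.univ.pi fun _ : Fin d => Set.Ico (0 : ℝ) 1) = box d := by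
    ext x
    rw [Set.mem_smul_set_iff_inv_smul_mem₀ hpi.ne', box]
    simp only [Set.mem_univ_pi, Pi.smul_apply, smul_eq_mul, Set.mem_Ico]
    refine forall_congr' fun i => ?_
    rw [inv_mul_lt_iff₀ hpi, mul_one, mul_nonneg_iff_of_pos_left (by positivity)]
  have h4 : ∀ x : Fin d → ℝ, toTorus ((2 * Real.pi) • x) = fun i => (x i : UnitAddCircle) := by
    intro x
    ext i
    simp [toTorus, hpi.ne']
  rw [h1, ← h3]
  simp only [h4] at h2
  rw [h2, smul_smul, Module.finrank_fin_fun, mul_inv_cancel₀ (by positivity), one_smul]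

theorem coeffC_comp_toTorus (G : UnitAddTorus (Fin d) → ℂ) :
    coeffC (fun x => G (toTorus x)) = mFourierCoeff G := by
  ext k
  have := integral_box_comp_toTorus (d := d) fun t => mFourier (-k) t • G t
  have hpi : (2 * Real.pi) ^ d ≠ 0 := by positivity
  simp only [coeffC, char_eq_mFourier, ← mFourier_neg]
  rw [mFourierCoeff]
  simp only [smul_eq_mul] at this ⊢
  simp only [mul_comm (G _)]
  rw [this, Complex.real_smul, ← mul_assoc, inv_mul_cancel₀ (by exact_mod_cast hpi), one_mul]

theorem enorm_sq_eq_ofReal {E : Type*} [NormedAddCommGroup E] (x : E) :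
    ‖x‖ₑ ^ 2 = ENNReal.ofReal (‖x‖ ^ 2) := by
  rw [ENNReal.ofReal_pow (norm_nonneg _), ofReal_norm]

theorem tsum_enorm_mFourierCoeff_sq (F : C(UnitAddTorus (Fin d), ℂ)) :
    ∑' k, ‖mFourierCoeff F k‖ₑ ^ 2 = ENNReal.ofReal (∫ t, ‖F t‖ ^ 2) := by
  have h := hasSum_sq_mFourierCoeff (F.toLp 2 volume ℂ)
  simp only [mFourierCoeff_toLp] at h
  have e : ∫ t, ‖F.toLp 2 volume ℂ t‖ ^ 2 = ∫ t, ‖F t‖ ^ 2 := by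
    refine integral_congr_ae ?_
    filter_upwards [ContinuousMap.coeFn_toLp (p := 2) (𝕜 := ℂ) volume F] with t ht
    rw [ht]
  rw [e] at h
  rw [← h.tsum_eq, ENNReal.ofReal_tsum_of_nonneg (fun _ => by positivity) h.summable]
  exact tsum_congr fun k => enorm_sq_eq_ofReal _

theorem mFourierCoeff_mFourier (j k : Fin d → ℤ) :
    mFourierCoeff (mFourier j) k = if j = k then 1 else 0 := by
  have h := orthonormal_iff_ite.mp (orthonormal_mFourier (d := Fin d)) k j
  rw [← mFourierCoeff_toLp, ← mFourierBasis_repr, HilbertBasis.repr_apply_apply,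
    coe_mFourierBasis]
  simpa only [eq_comm] using h

theorem mFourierCoeff_sum_mFourier (S : Finset (Fin d → ℤ)) (c : (Fin d → ℤ) → ℂ)
    (k : Fin d → ℤ) :
    mFourierCoeff (∑ j ∈ S, c j • mFourier j : C(UnitAddTorus (Fin d), ℂ)) k =
      if k ∈ S then c k else 0 := by
  have hI : ∀ F : C(UnitAddTorus (Fin d), ℂ), Integrable F volume := fun F =>
    F.continuous.integrable_of_hasCompactSupport (HasCompactSupport.of_compactSpace _)
  have : ∀ t, mFourier (-k) t • (∑ j ∈ S, c j • mFourier j : C(UnitAddTorus (Fin d), ℂ)) t =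
      ∑ j ∈ S, c j • (mFourier (-k) t • mFourier j t) := fun t => by
    simp only [ContinuousMap.coe_sum, ContinuousMap.coe_smul, Finset.sum_apply, Pi.smul_apply,
      smul_eq_mul, Finset.mul_sum]
    exact Finset.sum_congr rfl fun j _ => by ring
  rw [mFourierCoeff]
  simp only [this]
  rw [integral_finsetSum]
  · simp only [integral_smul]
    have h2 := fun j => mFourierCoeff_mFourier j k
    simp only [mFourierCoeff] at h2
    simp only [h2]
    simp
  · intro j _
    exact (hI (mFourier (-k) * mFourier j)).smul (c j)

theorem finite_knorm_lt (R : ℝ) : {k : Fin d → ℤ | knorm k < R}.Finite := by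
  refine (Set.Finite.pi' fun _ : Fin d => Set.finite_Icc (-⌈R⌉) ⌈R⌉).subset fun k hk i => ?_
  have h : |(k i : ℝ)| ≤ knorm k := by
    refine Real.le_sqrt_of_sq_le ?_
    rw [sq_abs]
    exact Finset.single_le_sum (f := fun i => (k i : ℝ) ^ 2) (fun j _ => sq_nonneg _)
      (Finset.mem_univ i)
  have h2 := abs_le.mp (h.trans (le_of_lt (lt_of_lt_of_le hk (Int.le_ceil R))))
  exact ⟨by exact_mod_cast h2.1, by exact_mod_cast h2.2⟩

theorem l2Sq_lpBlock_le (n : ℕ) (c : (Fin d → ℤ) → ℂ) :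
    l2Sq (lpBlock n c) ≤ blockLp n ∞ c ^ 2 := by
  by_cases htop : blockLp n ∞ c = ∞
  · simp [htop]
  have hsupp : ∀ k, ¬ knorm k < 2 ^ n → lpBlock n c k = 0 := by
    intro k hk
    unfold lpBlock
    split_ifs with h0 h1 h1
    · subst h0; simp_all
    · rfl
    · exact absurd h1.2 hk
    · rfl
  set S : Finset (Fin d → ℤ) := (finite_knorm_lt (d := d) (2 ^ n)).toFinset with hS
  have hS0 : ∀ k, k ∉ S → lpBlock n c k = 0 := fun k hk => hsupp k (by simpa [hS] using hk)
  set P : C(UnitAddTorus (Fin d), ℂ) := ∑ j ∈ S, lpBlock n c j • mFourier j with hP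
  have hreal : ∀ x, realize (lpBlock n c) x = P (toTorus x) := by
    intro x
    rw [realize, tsum_eq_sum (s := S) fun k hk => by rw [hS0 k hk, zero_mul]]
    simp [hP, char_eq_mFourier]
  have hcoef : ∀ k, mFourierCoeff P k = lpBlock n c k := by
    intro k
    rw [hP, mFourierCoeff_sum_mFourier]
    split_ifs with h
    · rfl
    · exact (hS0 k h).symm
  have hL : l2Sq (lpBlock n c) = ENNReal.ofReal (∫ t, ‖P t‖ ^ 2) := by
    rw [← tsum_enorm_mFourierCoeff_sq]
    simp only [hcoef]
    rfl
  set M := (blockLp n ∞ c).toReal with hM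
  have hMe : blockLp n ∞ c = ENNReal.ofReal M := (ENNReal.ofReal_toReal htop).symm
  have hae : ∀ᵐ x ∂(μbox d), ‖P (toTorus x)‖ ^ 2 ≤ M ^ 2 := by
    filter_upwards [ae_le_eLpNormEssSup (f := realize (lpBlock n c)) (μ := μbox d)] with x hx
    rw [← eLpNorm_exponent_top] at hx
    change _ ≤ blockLp n ∞ c at hx
    rw [hreal, hMe, ← ofReal_norm, ENNReal.ofReal_le_ofReal_iff ENNReal.toReal_nonneg] at hx
    exact pow_le_pow_left₀ (norm_nonneg _) hx 2
  have hpi : 0 < (2 * Real.pi) ^ d := by positivity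
  have hbox : μbox d Set.univ = ENNReal.ofReal ((2 * Real.pi) ^ d) := by
    rw [μbox, Measure.restrict_apply_univ, box, Real.volume_pi_Ico]
    simp [ENNReal.ofReal_pow, Real.pi_pos.le]
  have hfin : IsFiniteMeasure (μbox d) := ⟨by rw [hbox]; exact ENNReal.ofReal_lt_top⟩
  have hint : (2 * Real.pi) ^ d * ∫ t, ‖P t‖ ^ 2 ≤ (2 * Real.pi) ^ d * M ^ 2 := by
    rw [← smul_eq_mul, ← integral_box_comp_toTorus]
    have hPc : Continuous fun x : Fin d → ℝ => ‖P (toTorus x)‖ ^ 2 :=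
      ((P.continuous.comp isOpenQuotientMap_toTorus.continuous).norm).pow 2
    have hI : Integrable (fun x : Fin d → ℝ => ‖P (toTorus x)‖ ^ 2) (μbox d) :=
      Integrable.mono' (integrable_const (M ^ 2)) hPc.aestronglyMeasurable
        (by filter_upwards [hae] with x hx; rwa [Real.norm_of_nonneg (by positivity)])
    refine (integral_mono_ae hI (integrable_const (M ^ 2)) hae).trans_eq ?_
    rw [integral_const, Measure.real, hbox, ENNReal.toReal_ofReal hpi.le, smul_eq_mul]
  rw [hL, hMe, ← ENNReal.ofReal_pow ENNReal.toReal_nonneg]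
  exact ENNReal.ofReal_le_ofReal (le_of_mul_le_mul_left hint hpi)

theorem exists_lpBlock_eq (c : (Fin d → ℤ) → ℂ) (k : Fin d → ℤ) :
    ∃ n : ℕ, lpBlock n c k = c k := by
  rcases lt_or_ge (knorm k) 1 with h | h
  · exact ⟨0, by simp [lpBlock, h]⟩
  · obtain ⟨n, hn, hn'⟩ := exists_nat_pow_near h one_lt_two
    exact ⟨n + 1, by simp [lpBlock, hn, hn']⟩

theorem sobW_mul_lpBlock_le (s : ℝ) (n : ℕ) (c : (Fin d → ℤ) → ℂ) (k : Fin d → ℤ) :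
    sobW s k * ‖lpBlock n c k‖ₑ ^ 2 ≤
      ENNReal.ofReal (4 ^ |s|) * ENNReal.ofReal ((4 ^ n) ^ s) * ‖lpBlock n c k‖ₑ ^ 2 := by
  by_cases h0 : lpBlock n c k = 0
  · simp [h0]
  gcongr
  rw [← ENNReal.ofReal_mul (by positivity)]
  refine ENNReal.ofReal_le_ofReal ?_
  have hk : 1 + knorm k ^ 2 ≤ 4 * 4 ^ n ∧ (4 : ℝ) ^ n ≤ 4 * (1 + knorm k ^ 2) := by
    have hkn : 0 ≤ knorm k := Real.sqrt_nonneg _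
    unfold lpBlock at h0
    split_ifs at h0 with hn h1 h1
    · subst hn
      constructor <;> nlinarith
    · exact absurd rfl h0
    · obtain ⟨m, rfl⟩ := Nat.exists_eq_succ_of_ne_zero hn
      obtain ⟨ha, hb⟩ := h1
      have e : (4 : ℝ) ^ m = 2 ^ m * 2 ^ m := by rw [← mul_pow]; norm_num
      simp only [Nat.succ_eq_add_one, Nat.add_sub_cancel, pow_succ] at ha hb ⊢
      have : (1 : ℝ) ≤ 2 ^ m := one_le_pow₀ one_le_two
      rw [e]
      constructor <;> nlinarith
    · exact absurd rfl h0
  have hpos := one_add_knorm_sq_pos k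
  rcases le_total 0 s with hs | hs
  · rw [abs_of_nonneg hs, ← Real.mul_rpow (by norm_num) (by positivity)]
    exact Real.rpow_le_rpow hpos.le hk.1 hs
  · rw [abs_of_nonpos hs, Real.rpow_neg (by norm_num), ← Real.inv_rpow (by norm_num),
      ← Real.mul_rpow (by norm_num) (by positivity)]
    exact Real.rpow_le_rpow_of_nonpos (by positivity) (by linarith [hk.2]) hs

/-- The embedding `C^α ⊆ H^s` for `s < α`. -/
theorem sobSq_ne_top_of_besovNorm {α s : ℝ} (hs : s < α) {c : (Fin d → ℤ) → ℂ}
    (hc : besovNorm α ∞ ∞ c ≠ ∞) : sobSq s c ≠ ∞ := by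
  set M := besovNorm α ∞ ∞ c with hM
  have hblock : ∀ n : ℕ, (2 : ℝ≥0∞) ^ (α * (n : ℝ)) * blockLp n ∞ c ≤ M := by
    intro n
    rw [hM, besovNorm, if_pos rfl]
    exact le_iSup (fun n : ℕ => (2 : ℝ≥0∞) ^ (α * (n : ℝ)) * blockLp n ∞ c) n
  set q : ℝ≥0∞ := ENNReal.ofReal (4 ^ (s - α)) with hq
  have hq1 : q < 1 := by
    rw [hq, ENNReal.ofReal_lt_one]
    exact Real.rpow_lt_one_of_one_lt_of_neg (by norm_num) (by linarith)
  have hterm : ∀ n : ℕ, ENNReal.ofReal ((4 ^ n) ^ s) * blockLp n ∞ c ^ 2 ≤ M ^ 2 * q ^ n := by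
    intro n
    have h2 : (2 : ℝ≥0∞) ^ (α * (n : ℝ)) = ENNReal.ofReal (2 ^ (α * n)) := by
      rw [← ENNReal.ofReal_rpow_of_pos (by norm_num)]
      norm_num
    have e : ENNReal.ofReal ((4 ^ n) ^ s) = q ^ n * ENNReal.ofReal (2 ^ (α * n)) ^ 2 := by
      rw [hq, ← ENNReal.ofReal_pow (by positivity), ← ENNReal.ofReal_pow (by positivity),
        ← ENNReal.ofReal_mul (by positivity)]
      congr 1
      rw [← Real.rpow_natCast ((2 : ℝ) ^ _), ← Real.rpow_mul (by norm_num),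
        ← Real.rpow_natCast ((4 : ℝ) ^ _), ← Real.rpow_mul (by norm_num),
        ← Real.rpow_natCast (4 : ℝ), ← Real.rpow_mul (by norm_num),
        show (4 : ℝ) = 2 ^ (2 : ℝ) by norm_num, ← Real.rpow_mul (by norm_num),
        ← Real.rpow_mul (by norm_num), ← Real.rpow_add (by norm_num)]
      congr 1
      push_cast
      ring
    calc ENNReal.ofReal ((4 ^ n) ^ s) * blockLp n ∞ c ^ 2
        = q ^ n * ((2 : ℝ≥0∞) ^ (α * (n : ℝ)) * blockLp n ∞ c) ^ 2 := by rw [e, h2]; ring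
      _ ≤ q ^ n * M ^ 2 := by gcongr; exact hblock n
      _ = _ := mul_comm _ _
  refine ne_top_of_le_ne_top (b := ENNReal.ofReal (4 ^ |s|) * (M ^ 2 * (1 - q)⁻¹)) ?_ ?_
  · refine ENNReal.mul_ne_top ENNReal.ofReal_ne_top (ENNReal.mul_ne_top (by finiteness) ?_)
    rw [ENNReal.inv_ne_top]
    exact (tsub_pos_of_lt hq1).ne'
  calc sobSq s c = ∑' k, sobW s k * ‖c k‖ₑ ^ 2 := rfl
    _ ≤ ∑' k, ∑' n, sobW s k * ‖lpBlock n c k‖ₑ ^ 2 := by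
        refine ENNReal.tsum_le_tsum fun k => ?_
        obtain ⟨n, hn⟩ := exists_lpBlock_eq c k
        refine le_trans (le_of_eq ?_) (ENNReal.le_tsum n)
        rw [hn]
    _ ≤ ∑' k, ∑' n : ℕ, ENNReal.ofReal (4 ^ |s|) * ENNReal.ofReal ((4 ^ n) ^ s) *
          ‖lpBlock n c k‖ₑ ^ 2 :=
        ENNReal.tsum_le_tsum fun k => ENNReal.tsum_le_tsum fun n => sobW_mul_lpBlock_le s n c k
    _ = ∑' n : ℕ, ENNReal.ofReal (4 ^ |s|) * (ENNReal.ofReal ((4 ^ n) ^ s) *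
          l2Sq (lpBlock n c)) := by
        rw [ENNReal.tsum_comm]
        refine tsum_congr fun n => ?_
        rw [ENNReal.tsum_mul_left, mul_assoc]
        rfl
    _ ≤ ∑' n : ℕ, ENNReal.ofReal (4 ^ |s|) * (M ^ 2 * q ^ n) := by
        refine ENNReal.tsum_le_tsum fun n => ?_
        refine mul_le_mul' le_rfl (le_trans ?_ (hterm n))
        exact mul_le_mul' le_rfl (l2Sq_lpBlock_le n c)
    _ = _ := by rw [ENNReal.tsum_mul_left, ENNReal.tsum_mul_left, ENNReal.tsum_geometric]

theorem mFourier_apply_add (k : Fin d → ℤ) (x y : UnitAddTorus (Fin d)) :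
    mFourier k (x + y) = mFourier k x * mFourier k y := by
  simp [mFourier, fourier_apply, AddCircle.toCircle_add, Finset.prod_mul_distrib]

theorem mFourierCoeff_translate (F : UnitAddTorus (Fin d) → ℂ) (h : UnitAddTorus (Fin d))
    (k : Fin d → ℤ) :
    mFourierCoeff (fun t => F (t + h)) k = mFourier k h * mFourierCoeff F k := by
  have hone : mFourier k h * mFourier (-k) h = 1 := by
    have := mFourier_add (m := k) (n := -k) (x := h)
    rw [add_neg_cancel, mFourier_zero] at this
    exact this.symm
  have := integral_add_right_eq_self (μ := (volume : Measure (UnitAddTorus (Fin d))))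
    (fun t => mFourier (-k) t • F t) h
  rw [mFourierCoeff, mFourierCoeff, ← this, ← integral_const_mul]
  refine integral_congr_ae (ae_of_all _ fun t => ?_)
  simp only [mFourier_apply_add, smul_eq_mul]
  calc mFourier (-k) t * F (t + h)
      = (mFourier k h * mFourier (-k) h) * (mFourier (-k) t * F (t + h)) := by rw [hone, one_mul]
    _ = _ := by ring

theorem integrable_torus {E : Type*} [NormedAddCommGroup E] {F : UnitAddTorus (Fin d) → E}
    (hF : Continuous F) : Integrable F volume :=
  hF.integrable_of_hasCompactSupport (HasCompactSupport.of_compactSpace _)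

theorem tsum_enorm_mFourier_sub_one_mul (F : C(UnitAddTorus (Fin d), ℂ))
    (h : UnitAddTorus (Fin d)) :
    ∑' k, ‖mFourier k h - 1‖ₑ ^ 2 * ‖mFourierCoeff F k‖ₑ ^ 2 =
      ENNReal.ofReal (∫ t, ‖F (t + h) - F t‖ ^ 2) := by
  let D : C(UnitAddTorus (Fin d), ℂ) := ⟨fun t => F (t + h) - F t, by fun_prop⟩
  have hD : ∀ k, mFourierCoeff D k = (mFourier k h - 1) * mFourierCoeff F k := by
    intro k
    rw [sub_mul, one_mul, ← mFourierCoeff_translate, mFourierCoeff, mFourierCoeff, mFourierCoeff,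
      ← integral_sub]
    · exact integral_congr_ae (ae_of_all _ fun t => smul_sub _ _ _)
    · exact integrable_torus (by fun_prop)
    · exact integrable_torus (by fun_prop)
  have := tsum_enorm_mFourierCoeff_sq D
  simp only [hD, enorm_mul, mul_pow] at this
  exact this

theorem tsum_enorm_mFourier_sub_one_mul_le {F G : C(UnitAddTorus (Fin d), ℂ)} {L : ℝ}
    (hL : ∀ s t, ‖G s - G t‖ ≤ L * ‖F s - F t‖) (h : UnitAddTorus (Fin d)) :
    ∑' k, ‖mFourier k h - 1‖ₑ ^ 2 * ‖mFourierCoeff G k‖ₑ ^ 2 ≤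
      ENNReal.ofReal (L ^ 2) * ∑' k, ‖mFourier k h - 1‖ₑ ^ 2 * ‖mFourierCoeff F k‖ₑ ^ 2 := by
  rw [tsum_enorm_mFourier_sub_one_mul, tsum_enorm_mFourier_sub_one_mul,
    ← ENNReal.ofReal_mul (sq_nonneg _), ← integral_const_mul]
  refine ENNReal.ofReal_le_ofReal (integral_mono ?_ ?_ fun t => ?_)
  · exact integrable_torus (by fun_prop)
  · exact integrable_torus (by fun_prop)
  · refine (pow_le_pow_left₀ (norm_nonneg _) (hL _ _) 2).trans_eq ?_
    rw [mul_pow]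

/-- The dyadic shift by `2^{-n}` in the `i`-th coordinate. -/
def dyadicShift (i : Fin d) (n : ℕ) : UnitAddTorus (Fin d) := toTorus (Pi.single i ((2 : ℝ) ^ n)⁻¹)

theorem mFourier_dyadicShift (k : Fin d → ℤ) (i : Fin d) (n : ℕ) :
    mFourier k (dyadicShift i n) = Complex.exp (Complex.I * ((k i / 2 ^ n : ℝ) : ℂ)) := by
  rw [dyadicShift, ← char_eq_mFourier, char]
  simp [Pi.single_apply, div_eq_mul_inv]

theorem norm_exp_sub_one_sq_le {σ : ℝ} (h0 : 0 ≤ σ) (h1 : σ ≤ 1) (t : ℝ) :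
    ‖Complex.exp (Complex.I * (t : ℂ)) - 1‖ ^ 2 ≤ 4 * (t ^ 2) ^ σ := by
  rcases le_total (t ^ 2) 1 with h | h
  · have ha : ‖Complex.exp (Complex.I * (t : ℂ)) - 1‖ ^ 2 ≤ t ^ 2 := by
      rw [← sq_abs t]
      exact pow_le_pow_left₀ (norm_nonneg _) (Real.norm_exp_I_mul_ofReal_sub_one_le) 2
    have hb : t ^ 2 ≤ (t ^ 2) ^ σ := by
      simpa using Real.rpow_le_rpow_of_exponent_ge' (sq_nonneg t) h h0 h1
    have : 0 ≤ (t ^ 2) ^ σ := by positivity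
    linarith
  · have ha : ‖Complex.exp (Complex.I * (t : ℂ)) - 1‖ ^ 2 ≤ 4 := by
      rw [Complex.norm_exp_I_mul_ofReal_sub_one, Real.norm_eq_abs, sq_abs]
      nlinarith [Real.sin_sq_le_one (t / 2)]
    have hb : 1 ≤ (t ^ 2) ^ σ := Real.one_le_rpow h h0
    linarith

theorem one_le_four_mul_norm_exp_sub_one_sq {t : ℝ} (h1 : 1 ≤ |t|) (h2 : |t| ≤ 2) :
    1 ≤ 4 * ‖Complex.exp (Complex.I * (t : ℂ)) - 1‖ ^ 2 := by
  rw [Complex.norm_exp_I_mul_ofReal_sub_one, Real.norm_eq_abs, sq_abs]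
  have hs : Real.sin (t / 2) ^ 2 = Real.sin (|t| / 2) ^ 2 := by
    rcases abs_choice t with h | h <;> rw [h]
    rw [neg_div, Real.sin_neg, neg_sq]
  have h3 := Real.mul_le_sin (x := |t| / 2) (by positivity) (by linarith [Real.pi_gt_three])
  have h4 : 1 / 4 ≤ 2 / Real.pi * (|t| / 2) := by
    rw [div_mul_div_comm, div_le_div_iff₀ (by norm_num) (by positivity)]
    linarith [Real.pi_le_four]
  rw [mul_pow, hs]
  nlinarith

theorem tsum_dyadicShift_le {r σ : ℝ} (h0 : 0 ≤ σ) (h1 : σ ≤ 1) (i : Fin d) (k : Fin d → ℤ) :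
    ∑' n : ℕ, ENNReal.ofReal ((4 ^ n) ^ r) * ‖mFourier k (dyadicShift i n) - 1‖ₑ ^ 2 ≤
      4 * (1 - ENNReal.ofReal (4 ^ (r - σ)))⁻¹ * sobW σ k := by
  have hk : ((k i : ℝ) ^ 2) ^ σ ≤ (1 + knorm k ^ 2) ^ σ := by
    refine Real.rpow_le_rpow (sq_nonneg _) ?_ h0
    rw [knorm_sq]
    have := Finset.single_le_sum (f := fun i => (k i : ℝ) ^ 2) (fun j _ => sq_nonneg _)
      (Finset.mem_univ i)
    linarith
  have hterm : ∀ n : ℕ, ENNReal.ofReal ((4 ^ n) ^ r) * ‖mFourier k (dyadicShift i n) - 1‖ₑ ^ 2 ≤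
      4 * sobW σ k * ENNReal.ofReal (4 ^ (r - σ)) ^ n := by
    intro n
    rw [enorm_sq_eq_ofReal, mFourier_dyadicShift, sobW, show (4 : ℝ≥0∞) = ENNReal.ofReal 4 by simp,
      ← ENNReal.ofReal_mul (by positivity), ← ENNReal.ofReal_mul (by positivity),
      ← ENNReal.ofReal_pow (by positivity), ← ENNReal.ofReal_mul (by positivity)]
    refine ENNReal.ofReal_le_ofReal ?_
    have h2 : (4 : ℝ) ^ n = (2 ^ n) ^ 2 := by rw [← pow_mul, mul_comm, pow_mul]; norm_num
    have e : (((k i : ℝ) / 2 ^ n) ^ 2) ^ σ = ((k i : ℝ) ^ 2) ^ σ * ((4 : ℝ) ^ n) ^ (-σ) := by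
      rw [div_pow, ← h2, Real.div_rpow (sq_nonneg _) (by positivity),
        Real.rpow_neg (by positivity), div_eq_mul_inv]
    have e2 : ((4 : ℝ) ^ (r - σ)) ^ n = ((4 : ℝ) ^ n) ^ r * ((4 : ℝ) ^ n) ^ (-σ) := by
      rw [← Real.rpow_add (by positivity), ← Real.rpow_natCast, ← Real.rpow_natCast,
        ← Real.rpow_mul (by norm_num), ← Real.rpow_mul (by norm_num), mul_comm, sub_eq_add_neg]
    calc ((4 : ℝ) ^ n) ^ r * ‖Complex.exp (Complex.I * ((k i / 2 ^ n : ℝ) : ℂ)) - 1‖ ^ 2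
        ≤ ((4 : ℝ) ^ n) ^ r * (4 * (((k i : ℝ) / 2 ^ n) ^ 2) ^ σ) := by
          gcongr
          exact norm_exp_sub_one_sq_le h0 h1 _
      _ = 4 * ((k i : ℝ) ^ 2) ^ σ * ((4 : ℝ) ^ (r - σ)) ^ n := by rw [e, e2]; ring
      _ ≤ _ := by gcongr
  refine (ENNReal.tsum_le_tsum hterm).trans_eq ?_
  rw [ENNReal.tsum_mul_left, ENNReal.tsum_geometric]
  ring

theorem sobW_le_tsum_dyadicShift {r : ℝ} (hr : 0 ≤ r) (k : Fin d → ℤ) :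
    sobW r k ≤ 1 + ENNReal.ofReal ((4 * (d + 1)) ^ r * 4) * ∑ i, ∑' n : ℕ,
      ENNReal.ofReal ((4 ^ n) ^ r) * ‖mFourier k (dyadicShift i n) - 1‖ₑ ^ 2 := by
  by_cases hk : k = 0
  · subst hk
    refine le_add_right (le_of_eq ?_)
    simp [sobW, knorm]
  obtain ⟨j, hj⟩ := Function.ne_iff.mp hk
  obtain ⟨i, -, hi⟩ := Finset.exists_max_image Finset.univ (fun i => (k i : ℝ) ^ 2)
    ⟨j, Finset.mem_univ j⟩
  have hki : (1 : ℝ) ≤ |(k i : ℝ)| := by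
    have hj1 : (1 : ℝ) ≤ |(k j : ℝ)| := by exact_mod_cast Int.one_le_abs hj
    exact hj1.trans (sq_le_sq.mp (hi j (Finset.mem_univ j)))
  obtain ⟨n, hn, hn'⟩ := exists_nat_pow_near hki one_lt_two
  have h2 : (4 : ℝ) ^ n = (2 ^ n) ^ 2 := by rw [← pow_mul, mul_comm, pow_mul]; norm_num
  have hwt : 1 + knorm k ^ 2 ≤ 4 * (d + 1) * 4 ^ n := by
    have hsum : knorm k ^ 2 ≤ d * (k i : ℝ) ^ 2 := by
      rw [knorm_sq]
      simpa using Finset.sum_le_card_nsmul Finset.univ (fun i => (k i : ℝ) ^ 2) _ hi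
    have hsq : (k i : ℝ) ^ 2 ≤ 4 * 4 ^ n := by
      rw [h2, ← sq_abs]
      rw [pow_succ] at hn'
      nlinarith
    have h4 : (1 : ℝ) ≤ 4 ^ n := one_le_pow₀ (by norm_num)
    have hd : (0 : ℝ) ≤ d := by positivity
    nlinarith
  have hD : 1 ≤ 4 * ‖mFourier k (dyadicShift i n) - 1‖ ^ 2 := by
    rw [mFourier_dyadicShift]
    have h2n : (0 : ℝ) < 2 ^ n := by positivity
    refine one_le_four_mul_norm_exp_sub_one_sq ?_ ?_ <;> rw [abs_div, abs_of_pos h2n]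
    · rwa [le_div_iff₀ h2n, one_mul]
    · rw [div_le_iff₀ h2n, mul_comm, ← pow_succ]
      exact hn'.le
  refine le_add_left ?_
  calc sobW r k
      ≤ ENNReal.ofReal ((4 * (d + 1)) ^ r * 4) *
          (ENNReal.ofReal ((4 ^ n) ^ r) * ‖mFourier k (dyadicShift i n) - 1‖ₑ ^ 2) := by
        rw [sobW, enorm_sq_eq_ofReal, ← ENNReal.ofReal_mul (by positivity),
          ← ENNReal.ofReal_mul (by positivity)]
        refine ENNReal.ofReal_le_ofReal ?_
        have := Real.rpow_le_rpow (one_add_knorm_sq_pos k).le hwt hr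
        rw [Real.mul_rpow (by positivity) (by positivity)] at this
        have hp : 0 ≤ (4 * ((d : ℝ) + 1)) ^ r * ((4 : ℝ) ^ n) ^ r := by positivity
        nlinarith
    _ ≤ ENNReal.ofReal ((4 * (d + 1)) ^ r * 4) * ∑' n : ℕ, ENNReal.ofReal ((4 ^ n) ^ r) *
          ‖mFourier k (dyadicShift i n) - 1‖ₑ ^ 2 := by
        gcongr
        exact ENNReal.le_tsum n
    _ ≤ _ := by
        gcongr
        exact Finset.single_le_sum (f := fun i => ∑' n : ℕ, ENNReal.ofReal ((4 ^ n) ^ r) *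
          ‖mFourier k (dyadicShift i n) - 1‖ₑ ^ 2) (fun _ _ => zero_le) (Finset.mem_univ i)

/-- Composition with Lipschitz maps preserves fractional Sobolev regularity, up to an
arbitrarily small loss. -/
theorem sobSq_ne_top_of_lipschitz {F G : C(UnitAddTorus (Fin d), ℂ)} {L r σ : ℝ} (hr : 0 ≤ r)
    (hrσ : r < σ) (hσ : σ ≤ 1) (hL : ∀ s t, ‖G s - G t‖ ≤ L * ‖F s - F t‖)
    (hF : sobSq σ (mFourierCoeff F) ≠ ∞) : sobSq r (mFourierCoeff G) ≠ ∞ := by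
  set K := ENNReal.ofReal ((4 * (d + 1)) ^ r * 4)
  set Q := 4 * (1 - ENNReal.ofReal (4 ^ (r - σ)))⁻¹ with hQ
  have hQtop : Q ≠ ∞ := by
    refine ENNReal.mul_ne_top (by norm_num) ?_
    rw [ENNReal.inv_ne_top]
    refine (tsub_pos_of_lt ?_).ne'
    rw [ENNReal.ofReal_lt_one]
    exact Real.rpow_lt_one_of_one_lt_of_neg (by norm_num) (by linarith)
  let w : ℕ → ℝ≥0∞ := fun n => ENNReal.ofReal ((4 ^ n) ^ r)
  let D : Fin d → ℕ → (Fin d → ℤ) → ℝ≥0∞ := fun i n k => ‖mFourier k (dyadicShift i n) - 1‖ₑ ^ 2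
  have swap : ∀ (H : C(UnitAddTorus (Fin d), ℂ)) (i : Fin d),
      ∑' k, (∑' n, w n * D i n k) * ‖mFourierCoeff H k‖ₑ ^ 2 =
        ∑' n, w n * ∑' k, D i n k * ‖mFourierCoeff H k‖ₑ ^ 2 := by
    intro H i
    simp only [← ENNReal.tsum_mul_right, ← ENNReal.tsum_mul_left]
    rw [ENNReal.tsum_comm]
    simp only [mul_assoc]
  have hi : ∀ i : Fin d, ∑' k, (∑' n, w n * D i n k) * ‖mFourierCoeff G k‖ₑ ^ 2 ≤
      ENNReal.ofReal (L ^ 2) * (Q * sobSq σ (mFourierCoeff F)) := by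
    intro i
    calc ∑' k, (∑' n, w n * D i n k) * ‖mFourierCoeff G k‖ₑ ^ 2
        = ∑' n, w n * ∑' k, D i n k * ‖mFourierCoeff G k‖ₑ ^ 2 := swap G i
      _ ≤ ∑' n, w n * (ENNReal.ofReal (L ^ 2) * ∑' k, D i n k * ‖mFourierCoeff F k‖ₑ ^ 2) := by
          refine ENNReal.tsum_le_tsum fun n => mul_le_mul' le_rfl ?_
          exact tsum_enorm_mFourier_sub_one_mul_le hL _
      _ = ENNReal.ofReal (L ^ 2) * ∑' k, (∑' n, w n * D i n k) * ‖mFourierCoeff F k‖ₑ ^ 2 := by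
          rw [swap, ← ENNReal.tsum_mul_left]
          exact tsum_congr fun n => mul_left_comm _ _ _
      _ ≤ ENNReal.ofReal (L ^ 2) * ∑' k, (Q * sobW σ k) * ‖mFourierCoeff F k‖ₑ ^ 2 := by
          refine mul_le_mul' le_rfl (ENNReal.tsum_le_tsum fun k => mul_le_mul' ?_ le_rfl)
          exact tsum_dyadicShift_le (hr.trans hrσ.le) hσ i k
      _ = _ := by
          rw [sobSq_eq, ← ENNReal.tsum_mul_left (a := Q)]
          simp only [mul_assoc]
  have hl2 : ∑' k, ‖mFourierCoeff G k‖ₑ ^ 2 ≠ ∞ := by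
    rw [tsum_enorm_mFourierCoeff_sq]
    exact ENNReal.ofReal_ne_top
  refine ne_top_of_le_ne_top (b := ∑' k, ‖mFourierCoeff G k‖ₑ ^ 2 +
    K * ∑ _i : Fin d, ENNReal.ofReal (L ^ 2) * (Q * sobSq σ (mFourierCoeff F))) ?_ ?_
  · refine ENNReal.add_ne_top.mpr ⟨hl2, ENNReal.mul_ne_top ENNReal.ofReal_ne_top ?_⟩
    refine ENNReal.sum_ne_top.mpr fun i _ => ?_
    exact ENNReal.mul_ne_top ENNReal.ofReal_ne_top (ENNReal.mul_ne_top hQtop hF)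
  · calc sobSq r (mFourierCoeff G)
        ≤ ∑' k, (1 + K * ∑ i, ∑' n, w n * D i n k) * ‖mFourierCoeff G k‖ₑ ^ 2 := by
          rw [sobSq_eq]
          exact ENNReal.tsum_le_tsum fun k => mul_le_mul' (sobW_le_tsum_dyadicShift hr k) le_rfl
      _ = ∑' k, ‖mFourierCoeff G k‖ₑ ^ 2 +
            K * ∑ i, ∑' k, (∑' n, w n * D i n k) * ‖mFourierCoeff G k‖ₑ ^ 2 := by
          simp only [add_mul, one_mul, mul_assoc, Finset.sum_mul]
          rw [ENNReal.tsum_add, ENNReal.tsum_mul_left,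
            Summable.tsum_finsetSum fun i _ => ENNReal.summable]
      _ ≤ _ := by
          gcongr with i _
          exact hi i

theorem exists_Lp_mFourierCoeff_eq {b : (Fin d → ℤ) → ℂ} (hb : l2Sq b ≠ ∞) :
    ∃ f : Lp ℂ 2 (volume : Measure (UnitAddTorus (Fin d))),
      (∀ k, mFourierCoeff f k = b k) ∧ ENNReal.ofReal (∫ t, ‖f t‖ ^ 2) = l2Sq b := by
  have hsum : Summable fun k => ‖b k‖ ^ 2 := by
    have h := ENNReal.summable_toReal hb
    refine h.congr fun k => ?_
    simp
  have hmem : Memℓp b 2 := memℓp_gen (by simpa using hsum)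
  refine ⟨mFourierBasis.repr.symm ⟨b, hmem⟩, fun k => ?_, ?_⟩
  · rw [← mFourierBasis_repr, LinearIsometryEquiv.apply_symm_apply]
  · have h := hasSum_sq_mFourierCoeff (mFourierBasis.repr.symm ⟨b, hmem⟩)
    rw [← h.tsum_eq, ENNReal.ofReal_tsum_of_nonneg (fun _ => by positivity) h.summable]
    refine tsum_congr fun k => ?_
    rw [← mFourierBasis_repr, LinearIsometryEquiv.apply_symm_apply, ← enorm_sq_eq_ofReal]
    rfl

theorem norm_mFourier_apply (k : Fin d → ℤ) (t : UnitAddTorus (Fin d)) : ‖mFourier k t‖ = 1 := by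
  simp only [mFourier, fourier_apply, ContinuousMap.coe_mk, norm_prod, Circle.norm_coe,
    Finset.prod_const_one]

/-- The Fourier coefficients of a product of two `L²` functions. -/
theorem convC_mFourierCoeff (f g : Lp ℂ 2 (volume : Measure (UnitAddTorus (Fin d))))
    (k : Fin d → ℤ) :
    convC (mFourierCoeff f) (mFourierCoeff g) k = mFourierCoeff (fun t => f t * g t) k := by
  have hmem : MemLp (fun t => (starRingEnd ℂ) (g t) * mFourier k t) 2
      (volume : Measure (UnitAddTorus (Fin d))) := by
    refine (Lp.memLp g).of_le ?_ (ae_of_all _ fun t => ?_)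
    · exact (Complex.continuous_conj.comp_aestronglyMeasurable (Lp.aestronglyMeasurable g)).mul
        (mFourier k).continuous.aestronglyMeasurable
    · simp [norm_mFourier_apply]
  have hae := hmem.coeFn_toLp
  have h := hasSum_prod_mFourierCoeff (hmem.toLp _) f
  have hcoef : ∀ l, (starRingEnd ℂ) (mFourierCoeff (hmem.toLp _) l) = mFourierCoeff g (k - l) := by
    intro l
    rw [mFourierCoeff, mFourierCoeff, ← integral_conj]
    refine integral_congr_ae ?_
    filter_upwards [hae] with t ht
    rw [ht]
    simp only [smul_eq_mul, map_mul, Complex.conj_conj, ← mFourier_neg, neg_neg]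
    rw [show -(k - l) = l + -k by abel, mFourier_add]
    ring
  have hint : ∫ t, (starRingEnd ℂ) (hmem.toLp _ t) * f t = mFourierCoeff (fun t => f t * g t) k := by
    rw [mFourierCoeff]
    refine integral_congr_ae ?_
    filter_upwards [hae] with t ht
    rw [ht]
    simp only [smul_eq_mul, map_mul, Complex.conj_conj, ← mFourier_neg]
    ring
  simp only [hcoef, hint] at h
  rw [convC, ← h.tsum_eq]
  exact tsum_congr fun l => mul_comm _ _

/-- The pairing of the Fourier coefficients of an integrable function and a continuous function
is the integral of the product whenever the series converges. -/
theorem pairC_mFourierCoeff {F : UnitAddTorus (Fin d) → ℂ} (hF : Integrable F volume)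
    (E : C(UnitAddTorus (Fin d), ℂ))
    (hs : Summable fun k => mFourierCoeff F k * mFourierCoeff E (-k)) :
    pairC (mFourierCoeff F) (mFourierCoeff E) = ∫ t, F t * E t := by
  have hbound : ∀ t, ‖E t‖ ≤ ‖E‖ := E.norm_coe_le_norm
  let G : C(UnitAddTorus (Fin d), ℂ) := ⟨fun y => ∫ x, F x * E (y + x), by
    refine continuous_of_dominated (bound := fun x => ‖F x‖ * ‖E‖) (fun y => ?_)
      (fun y => ae_of_all _ fun x => ?_) (hF.norm.mul_const _) (ae_of_all _ fun x => ?_)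
    · exact hF.aestronglyMeasurable.mul
        (Continuous.aestronglyMeasurable (by fun_prop))
    · rw [norm_mul]
      gcongr
      exact hbound _
    · fun_prop⟩
  have hG : ∀ k, mFourierCoeff G k = mFourierCoeff F (-k) * mFourierCoeff E k := by
    intro k
    have hI : Integrable (Function.uncurry fun y x => mFourier (-k) y * (F x * E (y + x)))
        ((volume : Measure (UnitAddTorus (Fin d))).prod volume) := by
      have h1 : Integrable (fun z : UnitAddTorus (Fin d) × UnitAddTorus (Fin d) => F z.2)
          ((volume : Measure (UnitAddTorus (Fin d))).prod volume) := hF.comp_snd _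
      refine (h1.bdd_mul (c := ‖E‖) (f := fun z => mFourier (-k) z.1 * E (z.1 + z.2))
        (Continuous.aestronglyMeasurable (by fun_prop)) (ae_of_all _ fun z => ?_)).congr
        (ae_of_all _ fun z => ?_)
      · rw [norm_mul, norm_mFourier_apply, one_mul]
        exact hbound _
      · simp only [Function.uncurry]
        ring
    calc mFourierCoeff G k = ∫ y, ∫ x, mFourier (-k) y * (F x * E (y + x)) := by
          rw [mFourierCoeff]
          refine integral_congr_ae (ae_of_all _ fun y => ?_)
          exact (integral_const_mul _ _).symm
      _ = ∫ x, ∫ y, mFourier (-k) y * (F x * E (y + x)) := integral_integral_swap hI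
      _ = ∫ x, F x * (mFourier k x * mFourierCoeff E k) := by
          refine integral_congr_ae (ae_of_all _ fun x => ?_)
          simp only [← mFourierCoeff_translate]
          rw [mFourierCoeff, ← integral_const_mul]
          refine integral_congr_ae (ae_of_all _ fun y => ?_)
          simp only [smul_eq_mul]
          ring
      _ = _ := by
          rw [show mFourierCoeff F (-k) = ∫ x, mFourier (- -k) x • F x from rfl,
            ← integral_mul_const]
          refine integral_congr_ae (ae_of_all _ fun x => ?_)
          simp only [neg_neg, smul_eq_mul]
          ring
  have hneg : ∀ k, mFourierCoeff F (-k) * mFourierCoeff E k =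
      (fun k => mFourierCoeff F k * mFourierCoeff E (-k)) (-k) := fun k => by simp
  have hGs : Summable (mFourierCoeff G) := by
    refine Summable.congr ((Equiv.neg (Fin d → ℤ)).summable_iff.mpr hs) fun k => ?_
    rw [hG, hneg]
    rfl
  have h0 := (hasSum_mFourier_series_apply_of_summable hGs 0).tsum_eq
  have hm0 : ∀ k : Fin d → ℤ, mFourier k (0 : UnitAddTorus (Fin d)) = 1 := fun k => by
    simp [mFourier]
  simp only [hm0, hG, smul_eq_mul, mul_one] at h0
  have hG0 : G 0 = ∫ t, F t * E t := by
    change ∫ x, F x * E (0 + x) = _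
    simp only [zero_add]
  rw [← hG0, ← h0, pairC, ← (Equiv.neg (Fin d → ℤ)).tsum_eq]
  exact tsum_congr fun k => (hneg k).symm

/-- Multiplication by a continuous function is bounded on `L²`, in terms of Fourier series. -/
theorem enorm_pairC_convC_mFourierCoeff_sq_le (E : C(UnitAddTorus (Fin d), ℂ))
    {a b : (Fin d → ℤ) → ℂ} (ha : l2Sq a ≠ ∞) (hb : l2Sq b ≠ ∞) :
    ‖pairC (convC a b) (mFourierCoeff E)‖ₑ ^ 2 ≤ ‖E‖ₑ ^ 2 * (l2Sq a * l2Sq b) := by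
  obtain ⟨f, hf, hfn⟩ := exists_Lp_mFourierCoeff_eq ha
  obtain ⟨g, hg, hgn⟩ := exists_Lp_mFourierCoeff_eq hb
  have hconv : convC a b = mFourierCoeff fun t => f t * g t := by
    ext k
    rw [← convC_mFourierCoeff, funext hf, funext hg]
  by_cases hs : Summable fun k => convC a b k * mFourierCoeff E (-k)
  swap
  · rw [pairC, tsum_eq_zero_of_not_summable hs]
    simp
  have hI : Integrable (fun t => f t * g t) volume := (Lp.memLp f).integrable_mul (Lp.memLp g)
  rw [hconv] at hs ⊢
  rw [pairC_mFourierCoeff hI E hs, ← hfn, ← hgn, enorm_sq_eq_ofReal, enorm_sq_eq_ofReal,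
    ← ENNReal.ofReal_mul (by positivity), ← ENNReal.ofReal_mul (by positivity)]
  refine ENNReal.ofReal_le_ofReal ?_
  have h1 : ‖∫ t, f t * g t * E t‖ ≤ (∫ t, ‖f t‖ * ‖g t‖) * ‖E‖ := by
    have hI' : Integrable (fun t => ‖f t‖ * ‖g t‖ * ‖E‖) volume := by
      simpa only [norm_mul] using hI.norm.mul_const ‖E‖
    rw [← integral_mul_const]
    refine norm_integral_le_of_norm_le hI' (ae_of_all _ fun t => ?_)
    rw [norm_mul, norm_mul]
    gcongr
    exact E.norm_coe_le_norm t
  have h2 := integral_mul_le_Lp_mul_Lq_of_nonneg (μ := (volume : Measure (UnitAddTorus (Fin d))))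
    Real.HolderConjugate.two_two (f := fun t => ‖f t‖) (g := fun t => ‖g t‖)
    (ae_of_all _ fun t => norm_nonneg _) (ae_of_all _ fun t => norm_nonneg _)
    (by simpa using (Lp.memLp f).norm) (by simpa using (Lp.memLp g).norm)
  simp only [Real.rpow_two, ← Real.sqrt_eq_rpow] at h2
  have hA : 0 ≤ ∫ t, ‖f t‖ ^ 2 := integral_nonneg fun t => by positivity
  have hB : 0 ≤ ∫ t, ‖g t‖ ^ 2 := integral_nonneg fun t => by positivity
  calc ‖∫ t, f t * g t * E t‖ ^ 2
      ≤ (√(∫ t, ‖f t‖ ^ 2) * √(∫ t, ‖g t‖ ^ 2) * ‖E‖) ^ 2 := by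
        refine pow_le_pow_left₀ (norm_nonneg _) (h1.trans ?_) 2
        gcongr
    _ = _ := by
        rw [mul_pow, mul_pow, Real.sq_sqrt hA, Real.sq_sqrt hB]
        ring

theorem l2Sq_le_sobSq_one (a : (Fin d → ℤ) → ℂ) : l2Sq a ≤ sobSq 1 a := by
  refine ENNReal.tsum_le_tsum fun k => le_mul_of_one_le_left' ?_
  rw [Real.rpow_one, ← ENNReal.ofReal_one]
  exact ENNReal.ofReal_le_ofReal (by nlinarith [sq_nonneg (knorm k)])

theorem l2Sq_gradC_le_sobSq_one (j : Fin d) (a : (Fin d → ℤ) → ℂ) :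
    l2Sq (gradC j a) ≤ sobSq 1 a := by
  refine ENNReal.tsum_le_tsum fun k => ?_
  change ‖gradC j a k‖ₑ ^ 2 ≤ _ * ‖a k‖ₑ ^ 2
  rw [enorm_sq_eq_ofReal, enorm_sq_eq_ofReal, ← ENNReal.ofReal_mul' (by positivity), Real.rpow_one]
  refine ENNReal.ofReal_le_ofReal ?_
  have hk : (k j : ℝ) ^ 2 ≤ knorm k ^ 2 := by
    rw [knorm_sq]
    exact Finset.single_le_sum (f := fun i => (k i : ℝ) ^ 2) (fun i _ => sq_nonneg _)
      (Finset.mem_univ j)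
  have hn : ‖gradC j a k‖ ^ 2 = (k j : ℝ) ^ 2 * ‖a k‖ ^ 2 := by
    simp [gradC, mul_pow]
  rw [hn]
  gcongr
  linarith

theorem abs_exp_two_mul_sub_le {a b M : ℝ} (ha : a ≤ M) (hb : b ≤ M) :
    |Real.exp (2 * a) - Real.exp (2 * b)| ≤ 2 * Real.exp (2 * M) * |a - b| := by
  wlog h : b ≤ a generalizing a b
  · rw [abs_sub_comm, abs_sub_comm a]
    exact this hb ha (le_of_not_ge h)
  rw [abs_of_nonneg (sub_nonneg.mpr (Real.exp_le_exp.mpr (by linarith))),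
    abs_of_nonneg (sub_nonneg.mpr h)]
  have h1 : Real.exp (2 * b) = Real.exp (2 * a) * Real.exp (2 * b - 2 * a) := by
    rw [← Real.exp_add]
    ring_nf
  have h2 := Real.add_one_le_exp (2 * b - 2 * a)
  have h3 : Real.exp (2 * a) ≤ Real.exp (2 * M) := Real.exp_le_exp.mpr (by linarith)
  calc Real.exp (2 * a) - Real.exp (2 * b)
      = Real.exp (2 * a) * (1 - Real.exp (2 * b - 2 * a)) := by rw [h1]; ring
    _ ≤ Real.exp (2 * a) * (2 * (a - b)) := by gcongr; linarith
    _ ≤ Real.exp (2 * M) * (2 * (a - b)) := by gcongr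
    _ = _ := by ring

/-- Multiplication by `e^{2X}` is bounded on `L²`. -/
theorem exists_enorm_pairC_convC_E2Xc_sq_le {X : (Fin d → ℝ) → ℝ} (hXc : Continuous X)
    (hXp : periodicT X) :
    ∃ M : ℝ≥0∞, M ≠ ∞ ∧ ∀ a b : (Fin d → ℤ) → ℂ, l2Sq a ≠ ∞ → l2Sq b ≠ ∞ →
      ‖pairC (convC a b) (E2Xc X)‖ₑ ^ 2 ≤ M * (l2Sq a * l2Sq b) := by
  obtain ⟨F, hF⟩ := hXp.exists_lift hXc
  let E : C(UnitAddTorus (Fin d), ℂ) := ⟨fun t => (Real.exp (2 * F t) : ℂ), by fun_prop⟩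
  have hE : E2Xc X = mFourierCoeff E := by
    rw [← coeffC_comp_toTorus]
    simp only [E2Xc, E, ContinuousMap.coe_mk, hF]
  refine ⟨‖E‖ₑ ^ 2, by simp, fun a b ha hb => ?_⟩
  rw [hE]
  exact enorm_pairC_convC_mFourierCoeff_sq_le E ha hb

/-- Sobolev regularity of `e^{2X}` for a continuous Besov function `X`. -/
theorem sobSq_E2Xc_ne_top {X : (Fin d → ℝ) → ℝ} (hXc : Continuous X) (hXp : periodicT X)
    {α r : ℝ} (hr : 0 ≤ r) (hrα : r < α) (hα : α ≤ 1)
    (hX : besovNorm α ∞ ∞ (coeffC fun x => (X x : ℂ)) ≠ ∞) : sobSq r (E2Xc X) ≠ ∞ := by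
  obtain ⟨F, hF⟩ := hXp.exists_lift hXc
  let Fc : C(UnitAddTorus (Fin d), ℂ) := ⟨fun t => (F t : ℂ), by fun_prop⟩
  let E : C(UnitAddTorus (Fin d), ℂ) := ⟨fun t => (Real.exp (2 * F t) : ℂ), by fun_prop⟩
  have hE : E2Xc X = mFourierCoeff E := by
    rw [← coeffC_comp_toTorus]
    simp only [E2Xc, E, ContinuousMap.coe_mk, hF]
  have hFc : (coeffC fun x => (X x : ℂ)) = mFourierCoeff Fc := by
    rw [← coeffC_comp_toTorus]
    simp only [Fc, ContinuousMap.coe_mk, hF]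
  obtain ⟨σ, hrσ, hσα⟩ := exists_between hrα
  have hM : ∀ t, F t ≤ ‖F‖ := fun t => (le_abs_self _).trans (F.norm_coe_le_norm t)
  rw [hE]
  refine sobSq_ne_top_of_lipschitz (F := Fc) (L := 2 * Real.exp (2 * ‖F‖)) hr hrσ
    (hσα.le.trans hα) (fun s t => ?_) ?_
  · simp only [E, Fc, ContinuousMap.coe_mk, ← Complex.ofReal_sub, Complex.norm_real,
      Real.norm_eq_abs]
    exact abs_exp_two_mul_sub_le (hM s) (hM t)
  · rw [← hFc]
    exact sobSq_ne_top_of_besovNorm hσα hX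

end Torus

theorem ENNReal.le_rpow_half_mul_of_sq_le {x M A B : ℝ≥0∞} (h : x ^ 2 ≤ M * (A * B)) :
    x ≤ M ^ ((1 : ℝ) / 2) * (A ^ ((1 : ℝ) / 2) * B ^ ((1 : ℝ) / 2)) := by
  have h1 := ENNReal.rpow_le_rpow h (z := (1 : ℝ) / 2) (by norm_num)
  rwa [ENNReal.mul_rpow_of_nonneg _ _ (by norm_num), ENNReal.mul_rpow_of_nonneg _ _ (by norm_num),
    ← ENNReal.rpow_natCast, ← ENNReal.rpow_mul, Nat.cast_ofNat, mul_one_div_cancel two_ne_zero,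
    ENNReal.rpow_one] at h1

/-- continuity of the Anderson form
`𝔞(u₁,u₂) = ∫∇v₁·∇v₂ e^{2X} - ⟨Z, v₁v₂e^{2X}⟩ + c∫v₁v₂e^{2X}`, `v_i = e^{-X}u_i`, on
its domain `D(𝔞) = e^X H¹` with norm `‖u‖_𝔞² = ‖u‖_{L²}² + ‖e^{-X}u‖_{H¹}²`. -/
theorem statement11 (κ : ℝ) (hκ : 0 < κ) (hκ' : κ < 1/3)
    (X : (Fin 2 → ℝ) → ℝ) (hXc : Continuous X) (hXp : periodicT X)
    (hX : besovNorm (1 - κ) ∞ ∞ (coeffC fun x => (X x : ℂ)) ≠ ∞)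
    (Z : (Fin 2 → ℤ) → ℂ) (hZ : besovNorm (-κ) ∞ ∞ Z ≠ ∞) (c : ℝ) :
    ∃ C : ℝ, 0 < C ∧ ∀ a₁ a₂ : (Fin 2 → ℤ) → ℂ,
      anormSq X a₁ ≠ ∞ → anormSq X a₂ ≠ ∞ →
      ENNReal.ofReal ‖aForm X Z c a₁ a₂‖ ≤
        ENNReal.ofReal C * (anormSq X a₁) ^ ((1 : ℝ)/2) * (anormSq X a₂) ^ ((1 : ℝ)/2) := by
  obtain ⟨M, hM, hMle⟩ := exists_enorm_pairC_convC_E2Xc_sq_le hXc hXp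
  obtain ⟨K, hK, hKle⟩ := exists_pairC_convC_convC_le
  have hE : sobSq (2 / 3) (E2Xc X) ≠ ∞ :=
    sobSq_E2Xc_ne_top hXc hXp (by norm_num) (by linarith) (by linarith) hX
  have hZ' : sobSq (-(1 / 3)) Z ≠ ∞ := sobSq_ne_top_of_besovNorm (by linarith) hZ
  set N : ℝ≥0∞ := K * (sobSq (-(1 / 3)) Z * sobSq (2 / 3) (E2Xc X)) with hN
  have hN' : N ≠ ∞ := ENNReal.mul_ne_top hK (ENNReal.mul_ne_top hZ' hE)
  set m := M ^ ((1 : ℝ) / 2) with hm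
  set n := N ^ ((1 : ℝ) / 2) with hn
  have hm' : m ≠ ∞ := ENNReal.rpow_ne_top_of_nonneg (by norm_num) hM
  have hn' : n ≠ ∞ := ENNReal.rpow_ne_top_of_nonneg (by norm_num) hN'
  set S : ℝ≥0∞ := m + m + n + ‖(c : ℂ)‖ₑ * m with hS
  have hS' : S ≠ ∞ := by
    simp only [hS, ne_eq, ENNReal.add_eq_top, not_or]
    exact ⟨⟨⟨hm', hm'⟩, hn'⟩, ENNReal.mul_ne_top enorm_ne_top hm'⟩
  refine ⟨S.toReal + 1, by positivity, fun a₁ a₂ h₁ h₂ => ?_⟩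
  have hSC : S ≤ ENNReal.ofReal (S.toReal + 1) := by
    rw [ENNReal.le_ofReal_iff_toReal_le hS' (by positivity)]
    linarith
  have hA : ∀ a, sobSq 1 a ≤ anormSq X a := fun a => le_add_self
  set P := anormSq X a₁ ^ ((1 : ℝ) / 2) * anormSq X a₂ ^ ((1 : ℝ) / 2) with hP
  have hL : ∀ b₁ b₂ : (Fin 2 → ℤ) → ℂ, l2Sq b₁ ≤ sobSq 1 a₁ → l2Sq b₂ ≤ sobSq 1 a₂ →
      ‖pairC (convC b₁ b₂) (E2Xc X)‖ₑ ≤ m * P := by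
    intro b₁ b₂ hb₁ hb₂
    have g₁ := hb₁.trans (hA a₁)
    have g₂ := hb₂.trans (hA a₂)
    refine ENNReal.le_rpow_half_mul_of_sq_le
      ((hMle b₁ b₂ (ne_top_of_le_ne_top h₁ g₁) (ne_top_of_le_ne_top h₂ g₂)).trans ?_)
    gcongr
  have hZterm : ‖pairC (convC a₁ a₂) (convC Z (E2Xc X))‖ₑ ≤ n * P := by
    refine ENNReal.le_rpow_half_mul_of_sq_le ((hKle a₁ a₂ Z (E2Xc X)).trans ?_)
    calc _ = N * (sobSq 1 a₁ * sobSq 1 a₂) := by rw [hN]; ring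
      _ ≤ _ := by gcongr <;> exact hA _
  rw [ofReal_norm, mul_assoc, ← hP]
  refine le_trans ?_ (mul_le_mul_left hSC P)
  have e : S * P = m * P + m * P + n * P + ‖(c : ℂ)‖ₑ * (m * P) := by
    rw [hS]
    ring
  rw [aForm, e, Fin.sum_univ_two]
  refine (enorm_add_le _ _).trans (add_le_add ((enorm_sub_le).trans (add_le_add
    ((enorm_add_le _ _).trans (add_le_add ?_ ?_)) hZterm)) ?_)
  · exact hL _ _ (l2Sq_gradC_le_sobSq_one 0 a₁) (l2Sq_gradC_le_sobSq_one 0 a₂)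
  · exact hL _ _ (l2Sq_gradC_le_sobSq_one 1 a₁) (l2Sq_gradC_le_sobSq_one 1 a₂)
  · rw [enorm_mul]
    gcongr
    exact hL _ _ (l2Sq_le_sobSq_one a₁) (l2Sq_le_sobSq_one a₂)
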